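/- Let c > 0 and let F_2 : (0,1) → (1,∞) be the function F_2(x) = ln x/(x−1). Then lim_{n→∞} Pr_{Φ ∈ Ω(2,n,⌊cn⌋)}[Φ is satisfiable] equals 1 if c ≤ 3/2, and equals F_2^{−1}(2c/3) if c > 3/2. -/

import Mathlib

open scoped BigOperators

/-- A clause over `n` propositional variables: a finite set of literals,
where a literal is a pair (variable, polarity) with `true` = positive. -/
abbrev Clause (n : ℕ) := Finset (Fin n × Bool)

/-- A Horn clause: nonempty, with at most one positive literal. -/
def IsHornClause {n : ℕ} (C : Clause n) : Prop :=
  C.Nonempty ∧ (C.filter fun l => l.2 = true).card ≤ 1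

/-- The Horn clauses over `n` variables of length at most `k`. -/
def HornClauseLe (n k : ℕ) := {C : Clause n // IsHornClause C ∧ C.card ≤ k}

/-- The truth assignment `A` satisfies the clause `C`. -/
def SatClause {n : ℕ} (A : Fin n → Bool) (C : Clause n) : Prop :=
  ∃ l ∈ C, A l.1 = l.2

/-- A formula of the model `Ω(k,n,m)`: an (ordered) tuple of `m` Horn clauses
of length at most `k`; it is satisfiable if some assignment satisfies all clauses. -/
def SatFormula {n k m : ℕ} (F : Fin m → HornClauseLe n k) : Prop :=
  ∃ A : Fin n → Bool, ∀ i, SatClause A (F i).1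

/-- The probability that a random formula of `Ω(k,n,m)` (with the `m` clauses drawn
independently and uniformly from the Horn clauses of length at most `k`,
with repetition) is satisfiable. -/
noncomputable def satProb (k n m : ℕ) : ℝ :=
  (Nat.card {F : Fin m → HornClauseLe n k // SatFormula F} : ℝ) /
    (Nat.card (Fin m → HornClauseLe n k) : ℝ)

/-- `H_k(n)`: the number of Horn clauses of length at most `k` over `n` variables. -/
noncomputable def Hcount (k n : ℕ) : ℕ := Nat.card (HornClauseLe n k)


open Filter Topology


section RandomSubset

variable {α : Type*} [Fintype α]

/-- The probability of the random subset `X` of `α` when every element is left out independently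
with probability `q`. -/
def subsetWeight (q : ℝ) (X : Finset α) : ℝ :=
  (1 - q) ^ X.card * q ^ (Fintype.card α - X.card)

open Classical in
/-- The probability of the event `E` for a random subset of `α` from which every element is left out
independently with probability `q`. -/
noncomputable def subsetProb (q : ℝ) (E : Finset α → Prop) : ℝ :=
  ∑ X : Finset α, if E X then subsetWeight q X else 0

lemma subsetWeight_nonneg {q : ℝ} (h0 : 0 ≤ q) (h1 : q ≤ 1) (X : Finset α) :
    0 ≤ subsetWeight q X :=
  mul_nonneg (pow_nonneg (by linarith) _) (pow_nonneg h0 _)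

lemma subsetProb_mono {q : ℝ} (h0 : 0 ≤ q) (h1 : q ≤ 1) {E E' : Finset α → Prop}
    (h : ∀ X, E X → E' X) : subsetProb q E ≤ subsetProb q E' := by
  classical
  refine Finset.sum_le_sum fun X _ => ?_
  have := subsetWeight_nonneg h0 h1 X
  by_cases hE : E X
  · simp [hE, h X hE]
  · by_cases hE' : E' X <;> simp [hE, hE', this]

lemma subsetProb_nonneg {q : ℝ} (h0 : 0 ≤ q) (h1 : q ≤ 1) (E : Finset α → Prop) :
    0 ≤ subsetProb q E := by
  classical
  refine Finset.sum_nonneg fun X _ => ?_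
  split_ifs
  exacts [subsetWeight_nonneg h0 h1 X, le_rfl]

lemma sum_subsetWeight_powerset (q : ℝ) (Y : Finset α) :
    ∑ X ∈ Y.powerset, subsetWeight q X = q ^ (Fintype.card α - Y.card) := by
  have h : ∀ X ∈ Y.powerset, subsetWeight q X =
      q ^ (Fintype.card α - Y.card) * ((1 - q) ^ X.card * q ^ (Y.card - X.card)) := by
    intro X hX
    have h1 := Finset.card_le_card (Finset.mem_powerset.1 hX)
    have h2 := Finset.card_le_univ Y
    rw [subsetWeight, show Fintype.card α - X.card
      = (Fintype.card α - Y.card) + (Y.card - X.card) by omega, pow_add]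
    ring
  rw [Finset.sum_congr rfl h, ← Finset.mul_sum, Finset.sum_pow_mul_eq_add_pow]
  simp

lemma subsetProb_true (q : ℝ) : subsetProb q (fun _ : Finset α => True) = 1 := by
  have := sum_subsetWeight_powerset q (Finset.univ : Finset α)
  simpa [subsetProb] using this

lemma subsetProb_congr (q : ℝ) {E E' : Finset α → Prop} (h : ∀ X, E X ↔ E' X) :
    subsetProb q E = subsetProb q E' := by
  rw [funext fun X => propext (h X)]

lemma subsetProb_exists_unique {ι : Type*} (q : ℝ) (s : Finset ι) (E : Finset α → Prop)
    (D : ι → Finset α → Prop) (h : ∀ X, E X → ∃! i, i ∈ s ∧ D i X) :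
    subsetProb q E = ∑ i ∈ s, subsetProb q (fun X => D i X ∧ E X) := by
  classical
  unfold subsetProb
  rw [Finset.sum_comm]
  refine Finset.sum_congr rfl fun X _ => ?_
  by_cases hE : E X
  · obtain ⟨i, ⟨hi, hD⟩, hu⟩ := h X hE
    rw [Finset.sum_eq_single_of_mem i hi]
    · simp [hE, hD]
    · intro j hj hne
      have : ¬ D j X := fun hDj => hne (hu j ⟨hj, hDj⟩)
      simp [this]
  · simp [hE]

variable [DecidableEq α]

lemma subsetProb_and_notMem (q : ℝ) {E : Finset α → Prop} {b : α}
    (hE : ∀ X, E (insert b X) ↔ E X) :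
    subsetProb q (fun X => E X ∧ b ∉ X) = q * subsetProb q E := by
  classical
  have hsplit : ∀ f : Finset α → ℝ, ∑ X : Finset α, f X =
      ∑ X ∈ (Finset.univ.erase b).powerset, (f X + f (insert b X)) := by
    intro f
    rw [Finset.sum_add_distrib, ← Finset.sum_powerset_insert (Finset.notMem_erase _ _),
      Finset.insert_erase (Finset.mem_univ _), Finset.powerset_univ]
  unfold subsetProb
  rw [hsplit, hsplit, Finset.mul_sum]
  refine Finset.sum_congr rfl fun X hX => ?_
  have hb : b ∉ X := fun h => by simpa using Finset.mem_powerset.1 hX h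
  have hcard : X.card + 1 ≤ Fintype.card α := by
    rw [← Finset.card_insert_of_notMem hb]
    exact Finset.card_le_univ _
  by_cases h : E X
  · simp only [h, hb, hE, Finset.mem_insert_self, subsetWeight, Finset.card_insert_of_notMem hb]
    rw [show Fintype.card α - X.card = (Fintype.card α - (X.card + 1)) + 1 by omega]
    simp
    ring
  · simp [h, hE]

lemma subsetProb_and_disjoint (q : ℝ) {E : Finset α → Prop} (B : Finset α)
    (hE : ∀ b ∈ B, ∀ X, E (insert b X) ↔ E X) :
    subsetProb q (fun X => E X ∧ Disjoint X B) = q ^ B.card * subsetProb q E := by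
  induction B using Finset.induction_on with
  | empty => simp
  | insert b B hb ih =>
    have h1 := ih fun b' hb' => hE b' (Finset.mem_insert_of_mem hb')
    rw [Finset.card_insert_of_notMem hb, pow_succ', mul_assoc, ← h1, ← subsetProb_and_notMem]
    · refine subsetProb_congr q fun X => ?_
      rw [Finset.disjoint_insert_right]
      tauto
    · intro X
      rw [hE b (Finset.mem_insert_self _ _), Finset.disjoint_insert_left]
      tauto

lemma subsetProb_and_not_disjoint (q : ℝ) {E : Finset α → Prop} (B : Finset α)
    (hE : ∀ b ∈ B, ∀ X, E (insert b X) ↔ E X) :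
    subsetProb q (fun X => E X ∧ ¬ Disjoint X B) = (1 - q ^ B.card) * subsetProb q E := by
  have h : subsetProb q E = subsetProb q (fun X => E X ∧ Disjoint X B) +
      subsetProb q (fun X => E X ∧ ¬ Disjoint X B) := by
    classical
    unfold subsetProb
    rw [← Finset.sum_add_distrib]
    refine Finset.sum_congr rfl fun X _ => ?_
    by_cases h1 : E X <;> by_cases h2 : Disjoint X B <;> simp [h1, h2]
  rw [subsetProb_and_disjoint q B hE] at h
  linarith

end RandomSubset

section ReachableSet

/-- Horn clauses of length at most two: `inl (none, v)` is the unit clause `v`, `inl (some u, v)` is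
the implication `u → v`, and `inr s` is the disjunction of the negations of the variables in `s`. -/
abbrev HornCode (n : ℕ) :=
  (Option (Fin n) × Fin n) ⊕ {s : Finset (Fin n) // s.Nonempty ∧ s.card ≤ 2}

variable {n : ℕ}

/-- The unit clauses and implications violated by the assignment whose true variables form `S`. -/
def outClauses (S : Finset (Fin n)) : Finset (HornCode n) :=
  (Finset.insertNone S ×ˢ Sᶜ).map Function.Embedding.inl

/-- The negative clauses violated by the assignment whose true variables form `S`. -/
def negClauses (S : Finset (Fin n)) : Finset (HornCode n) :=
  (Finset.univ.filter fun s : {s : Finset (Fin n) // s.Nonempty ∧ s.card ≤ 2} => s.1 ⊆ S).map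
    Function.Embedding.inr

/-- The implications from `S \ T` to the complement of `S`. -/
def crossClauses (S T : Finset (Fin n)) : Finset (HornCode n) :=
  (((S \ T).map Function.Embedding.some) ×ˢ Sᶜ).map Function.Embedding.inl

/-- The clauses whose positive literal is `v`. -/
def inClauses (v : Fin n) : Finset (HornCode n) :=
  ((Finset.univ : Finset (Option (Fin n))) ×ˢ {v}).map Function.Embedding.inl

/-- `S` is the least set of variables closed under the unit clauses and implications in `X`. -/
def IsReach (X : Finset (HornCode n)) (S : Finset (Fin n)) : Prop :=
  Disjoint X (outClauses S) ∧ ∀ T ⊆ S, Disjoint X (outClauses T) → T = S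

/-- The clauses in `X` are simultaneously satisfiable. -/
def SatCodes (X : Finset (HornCode n)) : Prop :=
  ∃ S, Disjoint X (outClauses S) ∧ Disjoint X (negClauses S)

lemma inl_mem_outClauses {S : Finset (Fin n)} {o : Option (Fin n)} {v : Fin n} :
    (Sum.inl (o, v) : HornCode n) ∈ outClauses S ↔ (∀ u ∈ o, u ∈ S) ∧ v ∉ S := by
  simp [outClauses, Finset.mem_insertNone]

lemma inr_notMem_outClauses {S : Finset (Fin n)}
    {s : {s : Finset (Fin n) // s.Nonempty ∧ s.card ≤ 2}} :
    (Sum.inr s : HornCode n) ∉ outClauses S := by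
  simp [outClauses]

lemma inr_mem_negClauses {S : Finset (Fin n)}
    {s : {s : Finset (Fin n) // s.Nonempty ∧ s.card ≤ 2}} :
    (Sum.inr s : HornCode n) ∈ negClauses S ↔ s.1 ⊆ S := by
  simp [negClauses]

lemma inl_notMem_negClauses {S : Finset (Fin n)} {c : Option (Fin n) × Fin n} :
    (Sum.inl c : HornCode n) ∉ negClauses S := by
  simp [negClauses]

lemma card_outClauses (S : Finset (Fin n)) :
    (outClauses S).card = (S.card + 1) * (n - S.card) := by
  simp [outClauses, Finset.card_compl]

lemma card_crossClauses {S T : Finset (Fin n)} (h : T ⊆ S) :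
    (crossClauses S T).card = (S.card - T.card) * (n - S.card) := by
  simp [crossClauses, Finset.card_compl, Finset.card_sdiff_of_subset h]

lemma card_inClauses (v : Fin n) : (inClauses v).card = n + 1 := by
  simp [inClauses]

lemma card_negClauses (S : Finset (Fin n)) :
    (negClauses S).card = S.card + S.card.choose 2 := by
  have h : (Finset.univ.filter fun s : {s : Finset (Fin n) // s.Nonempty ∧ s.card ≤ 2} =>
      s.1 ⊆ S).map (Function.Embedding.subtype _) =
      S.powersetCard 1 ∪ S.powersetCard 2 := by
    ext s
    simp only [Finset.mem_map, Finset.mem_filter, Finset.mem_univ, true_and, Finset.mem_union,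
      Finset.mem_powersetCard, Function.Embedding.subtype_apply, Subtype.exists, exists_and_left,
      exists_prop, exists_eq_right_right, ← Finset.card_pos]
    constructor
    · rintro ⟨h1, h2, h3⟩
      by_cases h : s.card = 1
      · exact Or.inl ⟨h1, h⟩
      · exact Or.inr ⟨h1, by omega⟩
    · rintro (⟨h1, h2⟩ | ⟨h1, h2⟩) <;> exact ⟨h1, by omega, by omega⟩
  rw [negClauses, Finset.card_map, ← Finset.card_map (Function.Embedding.subtype _), h,
    Finset.card_union_of_disjoint, Finset.card_powersetCard, Finset.card_powersetCard,
    Nat.choose_one_right]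
  rw [Finset.disjoint_left]
  intro s hs hs'
  rw [Finset.mem_powersetCard] at hs hs'
  omega

lemma card_hornCode (n : ℕ) : Fintype.card (HornCode n) = (n + 1) * n + (n + n.choose 2) := by
  have h := card_negClauses (Finset.univ : Finset (Fin n))
  simp only [negClauses, Finset.subset_univ, Finset.filter_true, Finset.card_map, Finset.card_univ,
    Fintype.card_fin] at h
  rw [Fintype.card_sum, h]
  simp

lemma disjoint_outClauses_inter {X : Finset (HornCode n)} {S T : Finset (Fin n)}
    (hS : Disjoint X (outClauses S)) (hT : Disjoint X (outClauses T)) :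
    Disjoint X (outClauses (S ∩ T)) := by
  rw [Finset.disjoint_left] at *
  rintro (⟨o, v⟩ | s) hX
  · have h1 := hS hX
    have h2 := hT hX
    rw [inl_mem_outClauses] at *
    simp only [Finset.mem_inter] at *
    rintro ⟨h3, h4⟩
    have h5 : v ∈ S := by
      by_contra h
      exact h1 ⟨fun u hu => (h3 u hu).1, h⟩
    have h6 : v ∈ T := by
      by_contra h
      exact h2 ⟨fun u hu => (h3 u hu).2, h⟩
    exact h4 ⟨h5, h6⟩
  · exact inr_notMem_outClauses

lemma IsReach.subset {X : Finset (HornCode n)} {S T : Finset (Fin n)} (h : IsReach X S)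
    (hT : Disjoint X (outClauses T)) : S ⊆ T := by
  rw [← Finset.inter_eq_left]
  exact h.2 _ Finset.inter_subset_left (disjoint_outClauses_inter h.1 hT)

lemma exists_isReach {X : Finset (HornCode n)} {S : Finset (Fin n)}
    (hS : Disjoint X (outClauses S)) : ∃! T, T ∈ S.powerset ∧ IsReach X T := by
  obtain ⟨T, hTS, hT⟩ := exists_minimal_le_of_wellFoundedLT
    (fun T : Finset (Fin n) => Disjoint X (outClauses T)) S hS
  have hR : IsReach X T := ⟨hT.1, fun T' h1 h2 => le_antisymm h1 (hT.2 h2 h1)⟩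
  exact ⟨T, ⟨Finset.mem_powerset.2 hTS, hR⟩,
    fun T' hT' => subset_antisymm (hT'.2.subset hT.1) (hR.subset hT'.2.1)⟩

lemma disjoint_insert_iff_of_notMem {α : Type*} [DecidableEq α] {X B : Finset α} {b : α}
    (hb : b ∉ B) : Disjoint (insert b X) B ↔ Disjoint X B := by
  simp [Finset.disjoint_insert_left, hb]

lemma isReach_insert {S : Finset (Fin n)} {b : HornCode n} (hb : ∀ T ⊆ S, b ∉ outClauses T)
    (X : Finset (HornCode n)) : IsReach (insert b X) S ↔ IsReach X S := by
  unfold IsReach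
  rw [disjoint_insert_iff_of_notMem (hb S subset_rfl)]
  refine and_congr_right fun _ => forall₂_congr fun T hT => ?_
  rw [disjoint_insert_iff_of_notMem (hb T hT)]

lemma isReach_and_disjoint_outClauses_iff {X : Finset (HornCode n)} {S T : Finset (Fin n)}
    (hTS : T ⊆ S) : IsReach X T ∧ Disjoint X (outClauses S) ↔
      IsReach X T ∧ Disjoint X (crossClauses S T) := by
  refine and_congr_right fun hT => ?_
  have h1 := hT.1
  rw [Finset.disjoint_left] at h1
  rw [Finset.disjoint_left, Finset.disjoint_left]
  refine forall₂_congr fun c hc => ?_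
  have h2 := h1 hc
  rcases c with ⟨_ | u, v⟩ | s
  · simp only [inl_mem_outClauses, crossClauses] at *
    simp at *
    exact hTS h2
  · simp only [inl_mem_outClauses, crossClauses] at *
    simp at *
    have := @hTS v
    tauto
  · simp [inr_notMem_outClauses, crossClauses]

/-- The probability that in the random digraph on `k` vertices and a root, in which every arc is
missing independently with probability `q`, all vertices can be reached from the root. -/
noncomputable def reachAllProb (q : ℝ) (k : ℕ) : ℝ :=
  1 - ∑ i : Fin k, (k.choose i : ℝ) * reachAllProb q i * q ^ ((i + 1 : ℕ) * (k - i))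

lemma sum_reachAllProb (q : ℝ) (k : ℕ) :
    ∑ i ∈ Finset.range (k + 1),
      (k.choose i : ℝ) * reachAllProb q i * q ^ ((i + 1) * (k - i)) = 1 := by
  rw [Finset.sum_range_succ, reachAllProb.eq_1 q k, ← Fin.sum_univ_eq_sum_range
    (fun i => (k.choose i : ℝ) * reachAllProb q i * q ^ ((i + 1) * (k - i))) k]
  simp

lemma subsetProb_isReach (q : ℝ) (S : Finset (Fin n)) :
    subsetProb q (fun X => IsReach X S) =
      reachAllProb q S.card * q ^ ((S.card + 1) * (n - S.card)) := by
  induction S using Finset.strongInduction with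
  | H S ih =>
  have hclosed : subsetProb q (fun X => Disjoint X (outClauses S)) =
      q ^ ((S.card + 1) * (n - S.card)) := by
    have := subsetProb_and_disjoint q (E := fun _ => True) (outClauses S) (by simp)
    simpa [subsetProb_true, card_outClauses] using this
  have hsum := subsetProb_exists_unique q S.powerset (fun X => Disjoint X (outClauses S))
    (fun T X => IsReach X T) (fun X hX => exists_isReach hX)
  have hterm : ∀ T ∈ S.powerset,
      subsetProb q (fun X => IsReach X T ∧ Disjoint X (outClauses S)) =
        q ^ ((S.card - T.card) * (n - S.card)) * subsetProb q (fun X => IsReach X T) := by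
    intro T hT
    rw [Finset.mem_powerset] at hT
    rw [subsetProb_congr q fun X => isReach_and_disjoint_outClauses_iff hT,
      subsetProb_and_disjoint, card_crossClauses hT]
    intro b hb X
    refine isReach_insert (fun T' hT' => ?_) X
    rcases b with ⟨_ | u, v⟩ | s
    · simp [crossClauses] at hb
    · rw [inl_mem_outClauses]
      simp [crossClauses] at hb ⊢
      exact fun hu => absurd (hT' hu) hb.1.2
    · simp [crossClauses] at hb
  have hterm' : ∀ T ∈ S.powerset.erase S,
      subsetProb q (fun X => IsReach X T ∧ Disjoint X (outClauses S)) =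
        q ^ ((S.card + 1) * (n - S.card)) *
          (reachAllProb q T.card * q ^ ((T.card + 1) * (S.card - T.card))) := by
    intro T hT
    replace hT : T ⊂ S := Finset.mem_ssubsets.1 hT
    rw [hterm T (Finset.mem_powerset.2 hT.subset), ih T hT, mul_left_comm, ← pow_add,
      mul_left_comm, ← pow_add]
    congr 2
    obtain ⟨a, ha⟩ := Nat.exists_eq_add_of_le (Finset.card_le_card hT.subset)
    obtain ⟨b, hb⟩ := Nat.exists_eq_add_of_le (card_finset_fin_le S)
    have h1 : n - T.card = a + b := by omega
    have h2 : n - S.card = b := by omega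
    have h3 : S.card - T.card = a := by omega
    rw [h1, h2, h3, ha]
    ring
  have hrec : ∑ T ∈ S.powerset, reachAllProb q T.card * q ^ ((T.card + 1) * (S.card - T.card))
      = 1 := by
    rw [Finset.sum_powerset_apply_card
      (fun i => reachAllProb q i * q ^ ((i + 1) * (S.card - i))), ← sum_reachAllProb q S.card]
    simp [mul_assoc]
  have hself := hterm S (Finset.mem_powerset_self S)
  rw [hclosed, ← Finset.sum_erase_add _ _ (Finset.mem_powerset_self S),
    Finset.sum_congr rfl hterm', ← Finset.mul_sum, hself] at hsum
  rw [← Finset.sum_erase_add _ _ (Finset.mem_powerset_self S)] at hrec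
  simp only [Nat.sub_self, zero_mul, mul_zero, pow_zero, one_mul, mul_one] at hsum hrec
  rw [eq_sub_of_add_eq hrec] at hsum
  linarith

lemma subsetProb_satCodes (q : ℝ) :
    subsetProb q (fun X : Finset (HornCode n) => SatCodes X) =
      ∑ k ∈ Finset.range (n + 1), (n.choose k : ℝ) *
        (reachAllProb q k * q ^ ((k + 1) * (n - k)) * q ^ (k + k.choose 2)) := by
  have hsum := subsetProb_exists_unique q Finset.univ.powerset
    (fun X : Finset (HornCode n) => SatCodes X)   (fun T X => IsReach X T) (fun X _ => exists_isReach (by simp [outClauses]))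
  have hterm : ∀ S : Finset (Fin n), subsetProb q (fun X => IsReach X S ∧ SatCodes X) =
      reachAllProb q S.card * q ^ ((S.card + 1) * (n - S.card)) *
        q ^ (S.card + S.card.choose 2) := by
    intro S
    rw [← subsetProb_isReach, mul_comm, ← card_negClauses, ← subsetProb_and_disjoint]
    · refine subsetProb_congr q fun X => and_congr_right fun hX => ⟨?_, fun h => ⟨S, hX.1, h⟩⟩
      rintro ⟨T, h1, h2⟩
      have hST := hX.subset h1
      refine h2.mono_right ?_
      rintro (c | s) hs
      · exact absurd hs inl_notMem_negClauses
      · rw [inr_mem_negClauses] at *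
        exact hs.trans hST
    · rintro (c | s) hb X
      · exact absurd hb inl_notMem_negClauses
      · exact isReach_insert (fun T _ => inr_notMem_outClauses) X
  rw [hsum, Finset.sum_congr rfl fun S _ => hterm S, Finset.sum_powerset_apply_card
    (fun k => reachAllProb q k * q ^ ((k + 1) * (n - k)) * q ^ (k + k.choose 2))]
  simp

lemma reachAllProb_nonneg {q : ℝ} (h0 : 0 ≤ q) (h1 : q ≤ 1) (k : ℕ) :
    0 ≤ reachAllProb q k := by
  have h := subsetProb_isReach (n := k) q Finset.univ
  simp only [Finset.card_univ, Fintype.card_fin, Nat.sub_self, mul_zero, pow_zero, mul_one] at h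
  rw [← h]
  exact subsetProb_nonneg h0 h1 _

lemma reachAllProb_le {q : ℝ} (h0 : 0 ≤ q) (h1 : q ≤ 1) (k : ℕ) :
    reachAllProb q k ≤ (1 - q ^ (k + 1)) ^ k := by
  have h := subsetProb_isReach (n := k) q Finset.univ
  simp only [Finset.card_univ, Fintype.card_fin, Nat.sub_self, mul_zero, pow_zero, mul_one] at h
  have hin : ∀ V : Finset (Fin k), subsetProb q
      (fun X : Finset (HornCode k) => ∀ v ∈ V, ¬ Disjoint X (inClauses v)) =
      (1 - q ^ (k + 1)) ^ V.card := by
    intro V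
    induction V using Finset.induction_on with
    | empty => simp [subsetProb_true]
    | insert v V hv ih =>
      rw [Finset.card_insert_of_notMem hv, pow_succ', ← ih, ← card_inClauses v,
        ← subsetProb_and_not_disjoint]
      · refine subsetProb_congr q fun X => ?_
        rw [Finset.forall_mem_insert, and_comm]
      · intro b hb X
        refine forall₂_congr fun w hw => ?_
        rw [disjoint_insert_iff_of_notMem]
        intro hbw
        simp only [inClauses, Finset.mem_map, Finset.mem_product, Finset.mem_singleton] at hb hbw
        obtain ⟨c, hc, rfl⟩ := hb
        obtain ⟨d, hd, hdc⟩ := hbw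
        have : d = c := Sum.inl_injective hdc
        subst this
        exact hv (hc.2.symm.trans hd.2 ▸ hw)
  have := hin Finset.univ
  rw [Finset.card_univ, Fintype.card_fin] at this
  rw [← h, ← this]
  refine subsetProb_mono h0 h1 fun X hX v _ hdis => ?_
  have hv := hX.2 (Finset.univ.erase v) (Finset.subset_univ _) ?_
  · exact Finset.notMem_erase v _ (hv ▸ Finset.mem_univ v)
  · refine hdis.mono_right ?_
    rintro (⟨o, w⟩ | s) hs
    · simp [inl_mem_outClauses, inClauses] at hs ⊢
      exact hs.2.symm
    · exact absurd hs inr_notMem_outClauses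

end ReachableSet

section Poissonization

variable {α : Type*} [Fintype α] [DecidableEq α]

open Classical in
/-- The probability that the set of entries of a uniformly random `m`-tuple has the property `E`. -/
noncomputable def tupleProb (E : Finset α → Prop) (m : ℕ) : ℝ :=
  ((Finset.univ.filter fun F : Fin m → α => E (Finset.univ.image F)).card : ℝ) /
    (Fintype.card α : ℝ) ^ m

lemma tupleProb_nonneg (E : Finset α → Prop) (m : ℕ) : 0 ≤ tupleProb E m := by
  unfold tupleProb
  positivity

lemma tupleProb_le_one (E : Finset α → Prop) (m : ℕ) : tupleProb E m ≤ 1 := by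
  classical
  refine div_le_one_of_le₀ ?_ (by positivity)
  have := Finset.card_le_univ (Finset.univ.filter fun F : Fin m → α => E (Finset.univ.image F))
  rw [Fintype.card_fun, Fintype.card_fin] at this
  exact_mod_cast this

lemma tupleProb_antitone {E : Finset α → Prop} (hE : ∀ X Y, X ⊆ Y → E Y → E X) :
    Antitone (tupleProb E) := by
  classical
  refine antitone_nat_of_succ_le fun m => ?_
  rcases Nat.eq_zero_or_pos (Fintype.card α) with h0 | hpos
  · simpa [tupleProb, h0] using tupleProb_nonneg E m
  have hle : (Finset.univ.filter fun F : Fin (m + 1) → α => E (Finset.univ.image F)).card ≤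
      ((Finset.univ : Finset α) ×ˢ
        (Finset.univ.filter fun F : Fin m → α => E (Finset.univ.image F))).card := by
    refine Finset.card_le_card_of_injOn (fun F => (F 0, Fin.tail F)) ?_ ?_
    · intro F hF
      simp only [Finset.coe_filter, Finset.mem_univ, true_and, Set.mem_ofPred_eq] at hF
      simp only [Finset.coe_product, Set.mem_prod, Finset.coe_univ, Set.mem_univ, true_and,
        Finset.coe_filter, Finset.mem_univ, Set.mem_ofPred_eq]
      refine hE _ _ ?_ hF
      intro a ha
      obtain ⟨i, -, rfl⟩ := Finset.mem_image.1 ha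
      exact Finset.mem_image_of_mem F (Finset.mem_univ i.succ)
    · intro F _ G _ h
      rw [Prod.mk.injEq] at h
      rw [← Fin.cons_self_tail F, ← Fin.cons_self_tail G, h.1, h.2]
  rw [Finset.card_product, Finset.card_univ] at hle
  have hN : (0 : ℝ) < Fintype.card α := by exact_mod_cast hpos
  unfold tupleProb
  rw [div_le_div_iff₀ (by positivity) (by positivity), pow_succ']
  have hle' : ((Finset.univ.filter fun F : Fin (m + 1) → α => E (Finset.univ.image F)).card : ℝ) ≤
      Fintype.card α * (Finset.univ.filter fun F : Fin m → α => E (Finset.univ.image F)).card := by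
    exact_mod_cast hle
  calc _ ≤ _ := mul_le_mul_of_nonneg_right hle' (by positivity)
    _ = _ := by ring

lemma HasSum.congr_of_eq {f g : ℕ → ℝ} {a b : ℝ} (h : HasSum g b) (hf : ∀ m, f m = g m)
    (ha : a = b) : HasSum f a := by
  rw [funext hf, ha]
  exact h

lemma hasSum_poisson (μ t : ℝ) :
    HasSum (fun m : ℕ => Real.exp (-μ) * (μ ^ m / m.factorial) * t ^ m)
      (Real.exp (μ * (t - 1))) := by
  have h := (NormedSpace.expSeries_div_hasSum_exp (μ * t)).mul_left (Real.exp (-μ))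
  rw [← Real.exp_eq_exp_ℝ, ← Real.exp_add] at h
  refine h.congr_of_eq (fun m => ?_) ?_
  · rw [mul_pow]
    ring
  · congr 1
    ring

lemma hasSum_poisson_tupleProb_eq [Nonempty α] (μ : ℝ) (Y : Finset α) :
    HasSum (fun m : ℕ => Real.exp (-μ) * (μ ^ m / m.factorial) * tupleProb (fun X => X = Y) m)
      (subsetWeight (Real.exp (-μ / Fintype.card α)) Y) := by
  classical
  induction Y using Finset.strongInduction with
  | H Y ih =>
  have hN : (Fintype.card α : ℝ) ≠ 0 := by exact_mod_cast Fintype.card_ne_zero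
  have hcount : ∀ m : ℕ, ∑ X ∈ Y.powerset, tupleProb (fun Z => Z = X) m =
      ((Y.card : ℝ) / Fintype.card α) ^ m := by
    intro m
    unfold tupleProb
    rw [← Finset.sum_div, div_pow, ← Nat.cast_sum, ← Nat.cast_pow Y.card]
    congr 2
    have hmaps : ∀ F ∈ Fintype.piFinset (fun _ : Fin m => Y), Finset.univ.image F ∈ Y.powerset := by
      intro F hF
      rw [Finset.mem_powerset, Finset.image_subset_iff]
      exact fun i _ => Fintype.mem_piFinset.1 hF i
    have h := Finset.card_eq_sum_card_fiberwise hmaps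
    rw [Fintype.card_piFinset_const] at h
    rw [h]
    refine Finset.sum_congr rfl fun X hX => ?_
    congr 1
    ext F
    simp only [Finset.mem_filter, Finset.mem_univ, true_and, Fintype.mem_piFinset]
    refine ⟨fun h => ⟨fun i => ?_, h⟩, fun h => h.2⟩
    exact Finset.mem_powerset.1 hX (h ▸ Finset.mem_image_of_mem F (Finset.mem_univ i))
  have hsum := (hasSum_poisson μ ((Y.card : ℝ) / Fintype.card α)).sub
    (hasSum_sum (s := Y.ssubsets) fun X hX => ih X (Finset.mem_ssubsets.1 hX))
  have hweight := sum_subsetWeight_powerset (Real.exp (-μ / Fintype.card α)) Y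
  rw [← Finset.sum_erase_add _ _ (Finset.mem_powerset_self Y)] at hweight
  refine hsum.congr_of_eq (fun m => ?_) ?_
  · rw [← hcount m, ← Finset.mul_sum, ← mul_sub,
      ← Finset.sum_erase_add _ _ (Finset.mem_powerset_self Y)]
    congr 1
    exact (add_sub_cancel_left _ _).symm
  · rw [eq_sub_iff_add_eq, add_comm]
    refine hweight.trans ?_
    rw [← Real.exp_nat_mul, Nat.cast_sub (Finset.card_le_univ Y)]
    congr 1
    field_simp
    ring

lemma hasSum_poisson_tupleProb [Nonempty α] (μ : ℝ) (E : Finset α → Prop) :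
    HasSum (fun m : ℕ => Real.exp (-μ) * (μ ^ m / m.factorial) * tupleProb E m)
      (subsetProb (Real.exp (-μ / Fintype.card α)) E) := by
  classical
  have h := hasSum_sum (s := Finset.univ.filter E) fun Y _ => hasSum_poisson_tupleProb_eq μ Y
  refine h.congr_of_eq (fun m => ?_) ?_
  · rw [← Finset.mul_sum]
    congr 1
    unfold tupleProb
    rw [← Finset.sum_div, ← Nat.cast_sum]
    congr 2
    have hmaps : ∀ F ∈ Finset.univ.filter (fun F : Fin m → α => E (Finset.univ.image F)),
        Finset.univ.image F ∈ Finset.univ.filter E := by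
      intro F hF
      simpa using hF
    rw [Finset.card_eq_sum_card_fiberwise hmaps]
    refine Finset.sum_congr rfl fun X hX => ?_
    congr 1
    ext F
    simp only [Finset.mem_filter, Finset.mem_univ, true_and] at hX ⊢
    exact ⟨fun h => h.2, fun h => ⟨h ▸ hX, h⟩⟩
  · unfold subsetProb
    rw [Finset.sum_filter]

lemma poisson_comparison {s : ℕ → ℝ} {μ S θ a b : ℝ} {m : ℕ} (hμ : 0 ≤ μ)
    (hS : HasSum (fun j : ℕ => Real.exp (-μ) * (μ ^ j / j.factorial) * s j) S)
    (h : ∀ j, a ≤ b * s j + θ ^ j / θ ^ m) :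
    a ≤ b * S + Real.exp (μ * (θ - 1)) / θ ^ m := by
  have h1 := (hasSum_poisson μ 1).mul_right a
  have h2 := (hS.mul_left b).add ((hasSum_poisson μ θ).div_const (θ ^ m))
  simp only [sub_self, mul_zero, Real.exp_zero, one_mul] at h1
  refine hasSum_le (fun j => ?_) h1 h2
  have hw : 0 ≤ Real.exp (-μ) * (μ ^ j / j.factorial) := by positivity
  calc _ = Real.exp (-μ) * (μ ^ j / j.factorial) * a := by simp
    _ ≤ Real.exp (-μ) * (μ ^ j / j.factorial) * (b * s j + θ ^ j / θ ^ m) :=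
      mul_le_mul_of_nonneg_left (h j) hw
    _ = _ := by ring

lemma tupleProb_le_subsetProb_add [Nonempty α] {E : Finset α → Prop}
    (hE : ∀ X Y, X ⊆ Y → E Y → E X) {μ θ : ℝ} (hμ : 0 ≤ μ) (hθ : 1 ≤ θ) (m : ℕ) :
    tupleProb E m ≤ subsetProb (Real.exp (-μ / Fintype.card α)) E +
      Real.exp (μ * (θ - 1)) / θ ^ m := by
  have := poisson_comparison (a := tupleProb E m) (b := 1) (θ := θ) (m := m) hμ
    (hasSum_poisson_tupleProb μ E) fun j => ?_
  · simpa using this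
  have hθ0 : 0 < θ := by linarith
  rcases le_total j m with h | h
  · have := tupleProb_antitone hE h
    have : 0 ≤ θ ^ j / θ ^ m := by positivity
    linarith
  · have h1 : 1 ≤ θ ^ j / θ ^ m := (one_le_div (by positivity)).2 (pow_le_pow_right₀ hθ h)
    have := tupleProb_le_one E m
    have := tupleProb_nonneg E j
    linarith

lemma subsetProb_le_tupleProb_add [Nonempty α] {E : Finset α → Prop}
    (hE : ∀ X Y, X ⊆ Y → E Y → E X) {μ θ : ℝ} (hμ : 0 ≤ μ) (hθ0 : 0 < θ) (hθ : θ ≤ 1) (m : ℕ) :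
    subsetProb (Real.exp (-μ / Fintype.card α)) E ≤ tupleProb E m +
      Real.exp (μ * (θ - 1)) / θ ^ m := by
  have := poisson_comparison (a := - tupleProb E m) (b := -1) (θ := θ) (m := m) hμ
    (hasSum_poisson_tupleProb μ E) fun j => ?_
  · linarith
  rcases le_total m j with h | h
  · have := tupleProb_antitone hE h
    have : 0 ≤ θ ^ j / θ ^ m := by positivity
    linarith
  · have h1 : 1 ≤ θ ^ j / θ ^ m :=
      (one_le_div (by positivity)).2 (pow_le_pow_of_le_one hθ0.le hθ h)
    have := tupleProb_nonneg E m
    have := tupleProb_le_one E j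
    linarith

end Poissonization

section Encoding

variable {n : ℕ}

/-- The clause described by an element of `HornCode n`. -/
def HornCode.toClause : HornCode n → Clause n
  | Sum.inl (o, v) => insert (v, true) (o.toFinset.image fun u => (u, false))
  | Sum.inr s => s.1.image fun u => (u, false)

lemma HornCode.true_mem_toClause_inl {o : Option (Fin n)} {v w : Fin n} :
    (w, true) ∈ HornCode.toClause (Sum.inl (o, v)) ↔ w = v := by
  simp [HornCode.toClause]

lemma HornCode.false_mem_toClause_inl {o : Option (Fin n)} {v w : Fin n} :
    (w, false) ∈ HornCode.toClause (Sum.inl (o, v)) ↔ w ∈ o := by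
  simp [HornCode.toClause]

lemma HornCode.true_mem_toClause_inr {s : {s : Finset (Fin n) // s.Nonempty ∧ s.card ≤ 2}}
    {w : Fin n} : (w, true) ∈ HornCode.toClause (Sum.inr s) ↔ False := by
  simp [HornCode.toClause]

lemma HornCode.false_mem_toClause_inr {s : {s : Finset (Fin n) // s.Nonempty ∧ s.card ≤ 2}}
    {w : Fin n} : (w, false) ∈ HornCode.toClause (Sum.inr s) ↔ w ∈ s.1 := by
  simp [HornCode.toClause]

lemma HornCode.toClause_injective : Function.Injective (HornCode.toClause (n := n)) := by
  rintro (⟨o, v⟩ | s) (⟨o', v'⟩ | s') h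
  · have h1 : v = v' := by
      rw [← HornCode.true_mem_toClause_inl (o := o'), ← h, HornCode.true_mem_toClause_inl]
    have h2 : o = o' := by
      refine Option.ext fun w => ?_
      have := HornCode.false_mem_toClause_inl (o := o) (v := v) (w := w)
      rw [h, HornCode.false_mem_toClause_inl] at this
      exact this.symm
    rw [h1, h2]
  · have := HornCode.true_mem_toClause_inl (o := o) (v := v) (w := v)
    rw [h, HornCode.true_mem_toClause_inr] at this
    simp at this
  · have := HornCode.true_mem_toClause_inl (o := o') (v := v') (w := v')
    rw [← h, HornCode.true_mem_toClause_inr] at this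
    simp at this
  · congr 1
    ext w
    rw [← HornCode.false_mem_toClause_inr, h, HornCode.false_mem_toClause_inr]

lemma HornCode.isHornClause_toClause (c : HornCode n) :
    IsHornClause c.toClause ∧ c.toClause.card ≤ 2 := by
  rcases c with ⟨o, v⟩ | s
  · refine ⟨⟨⟨(v, true), HornCode.true_mem_toClause_inl.2 rfl⟩, ?_⟩, ?_⟩
    · refine Finset.card_le_one.2 ?_
      rintro ⟨a, b⟩ ha ⟨a', b'⟩ ha'
      rw [Finset.mem_filter] at ha ha'
      obtain ⟨h1, rfl⟩ := ha
      obtain ⟨h2, rfl⟩ := ha'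
      rw [HornCode.true_mem_toClause_inl] at h1 h2
      rw [h1, h2]
    · have ho : o.toFinset.card ≤ 1 := by cases o <;> simp
      exact (Finset.card_insert_le _ _).trans (Nat.succ_le_succ (Finset.card_image_le.trans ho))
  · refine ⟨⟨s.2.1.image _, ?_⟩, Finset.card_image_le.trans s.2.2⟩
    rw [Finset.filter_eq_empty_iff.2]
    · simp
    · rintro ⟨w, b⟩ hw rfl
      exact HornCode.true_mem_toClause_inr.1 hw

lemma HornCode.exists_toClause_eq {C : Clause n} (hC : IsHornClause C) (h2 : C.card ≤ 2) :
    ∃ c : HornCode n, c.toClause = C := by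
  rcases (C.filter fun l => l.2 = true).eq_empty_or_nonempty with h | ⟨⟨v, b⟩, hv⟩
  · have hneg : ∀ w, (w, true) ∉ C := fun w hw => by
      have := Finset.filter_eq_empty_iff.1 h hw
      simp at this
    refine ⟨Sum.inr ⟨C.image Prod.fst, hC.1.image _, Finset.card_image_le.trans h2⟩, ?_⟩
    ext ⟨w, _ | _⟩
    · rw [HornCode.false_mem_toClause_inr]
      simp [hneg]
    · rw [HornCode.true_mem_toClause_inr]
      simp [hneg]
  · rw [Finset.mem_filter] at hv
    obtain ⟨hv, rfl⟩ := hv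
    have hpos : ∀ w, (w, true) ∈ C → w = v := fun w hw => by
      have := Finset.card_le_one.1 hC.2 (w, true) (by simp [hw]) (v, true) (by simp [hv])
      simpa using this
    have hcard : (C.erase (v, true)).card ≤ 1 := by
      rw [Finset.card_erase_of_mem hv]
      omega
    have hfalse : ∀ w w', (w, false) ∈ C → (w', false) ∈ C → w = w' := fun w w' hw hw' => by
      have := Finset.card_le_one.1 hcard (w, false) (by simp [hw]) (w', false) (by simp [hw'])
      simpa using this
    by_cases hu : ∃ u, (u, false) ∈ C
    · obtain ⟨u, hu⟩ := hu
      refine ⟨Sum.inl (some u, v), ?_⟩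
      ext ⟨w, _ | _⟩
      · rw [HornCode.false_mem_toClause_inl, Option.mem_some_iff]
        exact ⟨fun h => h ▸ hu, fun h => hfalse _ _ hu h⟩
      · rw [HornCode.true_mem_toClause_inl]
        exact ⟨fun h => h ▸ hv, hpos w⟩
    · push Not at hu
      refine ⟨Sum.inl (none, v), ?_⟩
      ext ⟨w, _ | _⟩
      · rw [HornCode.false_mem_toClause_inl]
        simp [hu]
      · rw [HornCode.true_mem_toClause_inl]
        exact ⟨fun h => h ▸ hv, hpos w⟩

/-- `HornCode n` enumerates the Horn clauses of length at most two. -/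
noncomputable def hornCodeEquiv (n : ℕ) : HornCode n ≃ HornClauseLe n 2 :=
  Equiv.ofBijective (fun c => ⟨c.toClause, c.isHornClause_toClause⟩)
    ⟨fun _ _ h => HornCode.toClause_injective (congrArg Subtype.val h), fun C => by
      obtain ⟨c, hc⟩ := HornCode.exists_toClause_eq C.2.1 C.2.2
      exact ⟨c, Subtype.ext hc⟩⟩

lemma satClause_toClause_iff (A : Fin n → Bool) (c : HornCode n) :
    SatClause A c.toClause ↔ c ∉ outClauses (Finset.univ.filter fun v => A v = true) ∧
      c ∉ negClauses (Finset.univ.filter fun v => A v = true) := by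
  have hsat : SatClause A c.toClause ↔
      (∃ w, (w, true) ∈ c.toClause ∧ A w = true) ∨ ∃ w, (w, false) ∈ c.toClause ∧ A w = false := by
    constructor
    · rintro ⟨⟨w, _ | _⟩, h1, h2⟩
      exacts [Or.inr ⟨w, h1, h2⟩, Or.inl ⟨w, h1, h2⟩]
    · rintro (⟨w, h1, h2⟩ | ⟨w, h1, h2⟩)
      exacts [⟨_, h1, h2⟩, ⟨_, h1, h2⟩]
  rw [hsat]
  rcases c with ⟨o, v⟩ | s
  · simp only [HornCode.true_mem_toClause_inl, HornCode.false_mem_toClause_inl, inl_mem_outClauses,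
      inl_notMem_negClauses, Finset.mem_filter, Finset.mem_univ, true_and, not_and_or, not_forall,
      Bool.not_eq_false, not_false_eq_true, and_true, exists_eq_left, exists_prop, Bool.not_eq_true]
    exact or_comm
  · simp only [HornCode.true_mem_toClause_inr, HornCode.false_mem_toClause_inr,
      inr_notMem_outClauses, inr_mem_negClauses, Finset.subset_iff, Finset.mem_filter,
      Finset.mem_univ, true_and, not_forall, not_false_eq_true, exists_prop, Bool.not_eq_true,
      false_and, exists_false, false_or]

lemma satFormula_hornCodeEquiv_iff {m : ℕ} (F : Fin m → HornCode n) :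
    SatFormula (fun i => hornCodeEquiv n (F i)) ↔ SatCodes (Finset.univ.image F) := by
  have hA : ∀ A : Fin n → Bool, (∀ i, SatClause A (hornCodeEquiv n (F i)).1) ↔
      Disjoint (Finset.univ.image F) (outClauses (Finset.univ.filter fun v => A v = true)) ∧
      Disjoint (Finset.univ.image F) (negClauses (Finset.univ.filter fun v => A v = true)) := by
    intro A
    simp only [Finset.disjoint_left, Finset.mem_image, Finset.mem_univ, true_and,
      forall_exists_index, forall_apply_eq_imp_iff, ← forall_and]
    exact forall_congr' fun i => satClause_toClause_iff A (F i)
  constructor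
  · rintro ⟨A, h⟩
    exact ⟨_, (hA A).1 h⟩
  · rintro ⟨S, h⟩
    refine ⟨fun v => decide (v ∈ S), (hA _).2 ?_⟩
    simpa using h

lemma satProb_two_eq (n m : ℕ) :
    satProb 2 n m = tupleProb (fun X : Finset (HornCode n) => SatCodes X) m := by
  classical
  unfold satProb tupleProb
  have h1 : Nat.card {F : Fin m → HornClauseLe n 2 // SatFormula F} =
      (Finset.univ.filter fun F : Fin m → HornCode n => SatCodes (Finset.univ.image F)).card := by
    rw [← Fintype.card_subtype, ← Nat.card_eq_fintype_card]
    refine (Nat.card_congr ?_).symm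
    exact (Equiv.arrowCongr (Equiv.refl (Fin m)) (hornCodeEquiv n)).subtypeEquiv fun F =>
      (satFormula_hornCodeEquiv_iff F).symm
  have h2 : Nat.card (Fin m → HornClauseLe n 2) = Fintype.card (HornCode n) ^ m := by
    rw [← Nat.card_congr (Equiv.arrowCongr (Equiv.refl (Fin m)) (hornCodeEquiv n)),
      Nat.card_eq_fintype_card, Fintype.card_fun, Fintype.card_fin]
  rw [h1, h2, Nat.cast_pow]

lemma SatCodes.mono {X Y : Finset (HornCode n)} (h : X ⊆ Y) (hY : SatCodes Y) : SatCodes X := by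
  obtain ⟨S, h1, h2⟩ := hY
  exact ⟨S, h1.mono_left h, h2.mono_left h⟩

end Encoding

section Asymptotics

lemma choose_mul_pow_mul_pow_le {p θ : ℝ} (hp0 : 0 ≤ p) (hp1 : p ≤ 1) (hθ : 0 < θ) (N k : ℕ) :
    (N.choose k : ℝ) * p ^ k * (1 - p) ^ (N - k) ≤ Real.exp (N * p * (θ - 1)) / θ ^ k := by
  have h1p : 0 ≤ 1 - p := by linarith
  rcases lt_or_ge N k with hk | hk
  · rw [Nat.choose_eq_zero_of_lt hk]
    simp only [Nat.cast_zero, zero_mul]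
    positivity
  rw [le_div_iff₀ (by positivity)]
  have hpow : (p * θ + (1 - p)) ^ N ≤ Real.exp (N * p * (θ - 1)) := by
    have h := Real.add_one_le_exp (p * (θ - 1))
    calc (p * θ + (1 - p)) ^ N ≤ Real.exp (p * (θ - 1)) ^ N :=
          pow_le_pow_left₀ (by positivity) (by linarith) N
      _ = _ := by rw [← Real.exp_nat_mul, mul_assoc]
  refine le_trans ?_ hpow
  rw [add_pow]
  have hk' : k ∈ Finset.range (N + 1) := Finset.mem_range.2 (by omega)
  refine le_trans (le_of_eq ?_) (Finset.single_le_sum (f := fun i =>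
    (p * θ) ^ i * (1 - p) ^ (N - i) * (N.choose i : ℝ)) (fun i _ => by positivity) hk')
  simp only [mul_pow]
  ring

lemma choose_mul_reachAllProb_le {q θ : ℝ} (h0 : 0 ≤ q) (h1 : q ≤ 1) (hθ : 0 < θ) (N k : ℕ) :
    (N.choose k : ℝ) * reachAllProb q k * q ^ ((k + 1) * (N - k)) ≤
      Real.exp (N * (1 - q ^ (k + 1)) * (θ - 1)) / θ ^ k := by
  have hq1 : q ^ (k + 1) ≤ 1 := pow_le_one₀ h0 h1
  have hq0 : 0 ≤ q ^ (k + 1) := by positivity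
  refine le_trans ?_ (choose_mul_pow_mul_pow_le (p := 1 - q ^ (k + 1)) (by linarith) (by linarith)
    hθ N k)
  rw [sub_sub_cancel, ← pow_mul]
  have := reachAllProb_le h0 h1 k
  gcongr

lemma exp_neg_div_le_one {l : ℝ} (hl : 0 ≤ l) (n : ℕ) : Real.exp (-l / n) ≤ 1 := by
  rw [Real.exp_le_one_iff, neg_div]
  exact neg_nonpos.2 (by positivity)

lemma one_sub_exp_pow_le (l : ℝ) (n k : ℕ) :
    1 - Real.exp (-l / n) ^ (k + 1) ≤ l * (k + 1) / n := by
  rw [← Real.exp_nat_mul]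
  have := Real.add_one_le_exp (((k + 1 : ℕ) : ℝ) * (-l / n))
  have h : ((k + 1 : ℕ) : ℝ) * (-l / n) = - (l * (k + 1) / n) := by
    push_cast
    ring
  rw [h] at this ⊢
  linarith

lemma sub_sq_le_one_sub_exp_neg {y : ℝ} (hy : 0 ≤ y) : y - y ^ 2 ≤ 1 - Real.exp (-y) := by
  have h1 := Real.add_one_le_exp y
  have h2 : Real.exp (-y) ≤ 1 / (1 + y) := by
    rw [Real.exp_neg, ← one_div]
    exact one_div_le_one_div_of_le (by linarith) (by linarith)
  have h3 : 1 / (1 + y) ≤ 1 - y + y ^ 2 := by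
    rw [div_le_iff₀ (by linarith)]
    nlinarith [pow_nonneg hy 3]
  linarith

/-- The probability that `k` variables are forced and the random set of clauses is satisfiable. -/
noncomputable def satTerm (l : ℝ) (n k : ℕ) : ℝ :=
  (n.choose k : ℝ) * (reachAllProb (Real.exp (-l / n)) k *
    Real.exp (-l / n) ^ ((k + 1) * (n - k)) * Real.exp (-l / n) ^ (k + k.choose 2))

/-- The probability that `k` variables are forced when only `⌊x * n⌋` variables are present. -/
noncomputable def dualTerm (l x : ℝ) (n k : ℕ) : ℝ :=
  (⌊x * n⌋₊.choose k : ℝ) * reachAllProb (Real.exp (-l / n)) k *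
    Real.exp (-l / n) ^ ((k + 1) * (⌊x * n⌋₊ - k))

lemma satTerm_nonneg {l : ℝ} (hl : 0 ≤ l) (n k : ℕ) : 0 ≤ satTerm l n k := by
  have := reachAllProb_nonneg (Real.exp_pos (-l / n)).le (exp_neg_div_le_one hl n) k
  unfold satTerm
  positivity

lemma dualTerm_nonneg {l : ℝ} (hl : 0 ≤ l) (x : ℝ) (n k : ℕ) : 0 ≤ dualTerm l x n k := by
  have := reachAllProb_nonneg (Real.exp_pos (-l / n)).le (exp_neg_div_le_one hl n) k
  unfold dualTerm
  positivity

lemma dualTerm_le {l x : ℝ} (hl : 0 < l) (hx : 0 < x) (hlx : l * x < 1) {n : ℕ} (hn : 0 < n)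
    (k : ℕ) :
    dualTerm l x n k ≤ Real.exp (1 - l * x) * (l * x * Real.exp (1 - l * x)) ^ k := by
  have hn' : (0 : ℝ) < n := by exact_mod_cast hn
  have hlx0 : 0 < l * x := by positivity
  refine (choose_mul_reachAllProb_le (θ := (l * x)⁻¹) (Real.exp_pos _).le
    (exp_neg_div_le_one hl.le n) (by positivity) _ k).trans ?_
  have h1 : (⌊x * n⌋₊ : ℝ) ≤ x * n := Nat.floor_le (by positivity)
  have h2 := one_sub_exp_pow_le l n k
  have h3 : 0 ≤ (l * x)⁻¹ - 1 := by
    have := (one_le_inv₀ hlx0).2 hlx.le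
    linarith
  have h4 : (⌊x * n⌋₊ : ℝ) * (1 - Real.exp (-l / n) ^ (k + 1)) * ((l * x)⁻¹ - 1) ≤
      x * n * (l * (k + 1) / n) * ((l * x)⁻¹ - 1) := by
    refine mul_le_mul_of_nonneg_right ?_ h3
    calc _ ≤ (⌊x * n⌋₊ : ℝ) * (l * (k + 1) / n) := by gcongr
      _ ≤ _ := by gcongr
  have h5 : x * n * (l * (k + 1) / n) * ((l * x)⁻¹ - 1) = (1 - l * x) + k * (1 - l * x) := by
    field_simp
    ring
  rw [h5] at h4
  rw [inv_pow, div_inv_eq_mul]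
  calc _ ≤ Real.exp ((1 - l * x) + k * (1 - l * x)) * (l * x) ^ k := by gcongr
    _ = _ := by
      rw [Real.exp_add, Real.exp_nat_mul, mul_pow (l * x)]
      ring

lemma satTerm_le {l : ℝ} (hl : 1 < l) :
    ∃ z : ℝ, 0 < z ∧ ∀ n : ℕ, 0 < n → ∀ k : ℕ, satTerm l n k ≤ Real.exp (-z) ^ k := by
  have hlog : Real.log l < l - 1 := Real.log_lt_sub_one_of_pos (by linarith) (by linarith)
  have hlog0 : 0 < Real.log l := Real.log_pos hl
  set e : ℝ := (l - 1 - Real.log l) / 2 with he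
  have he0 : 0 < e := by linarith
  set d : ℝ := e / ((l - 1) * l) with hd
  have hl1 : 0 < l - 1 := by linarith
  have hl0 : 0 < l := by linarith
  have hd0 : 0 < d := by positivity
  have hde : (l - 1) * l * d = e := by
    rw [hd]
    field_simp
  refine ⟨min e (l * d / 2), lt_min he0 (by positivity), fun n hn k => ?_⟩
  have hn' : (0 : ℝ) < n := by exact_mod_cast hn
  have hq0 : 0 ≤ Real.exp (-l / n) := (Real.exp_pos _).le
  have hq1 := exp_neg_div_le_one hl0.le n
  have hc := reachAllProb_nonneg hq0 hq1 k
  rw [← Real.exp_nat_mul]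
  have heq : satTerm l n k = ((n.choose k : ℝ) * reachAllProb (Real.exp (-l / n)) k *
    Real.exp (-l / n) ^ ((k + 1) * (n - k))) * Real.exp (-l / n) ^ (k + k.choose 2) := by
    unfold satTerm
    ring
  rcases le_or_gt ((k : ℝ) + 1) (d * n) with hk | hk
  · have h1 : satTerm l n k ≤ Real.exp (n * (1 - Real.exp (-l / n) ^ (k + 1)) * (l⁻¹ - 1)) /
        l⁻¹ ^ k := by
      rw [heq]
      refine (mul_le_of_le_one_right (by positivity) (pow_le_one₀ hq0 hq1)).trans ?_
      exact choose_mul_reachAllProb_le hq0 hq1 (by positivity) n k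
    refine h1.trans ?_
    set y : ℝ := l * (k + 1) / n with hy
    have hy0 : 0 ≤ y := by positivity
    have hpow : Real.exp (-l / n) ^ (k + 1) = Real.exp (-y) := by
      rw [← Real.exp_nat_mul, hy]
      congr 1
      push_cast
      ring
    have hny : n * y = l * (k + 1) := by
      rw [hy]
      field_simp
    have hyd : y ≤ l * d := by
      rw [hy, div_le_iff₀ hn']
      nlinarith
    have h2 : n * (y - y ^ 2) ≤ n * (1 - Real.exp (-y)) :=
      mul_le_mul_of_nonneg_left (sub_sq_le_one_sub_exp_neg hy0) hn'.le
    have h3 : l * (k + 1) * (1 - l * d) ≤ n * (1 - Real.exp (-y)) := by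
      refine le_trans ?_ h2
      have : n * (y - y ^ 2) = l * (k + 1) * (1 - y) := by
        rw [← hny]
        ring
      rw [this]
      gcongr
    have h4 : n * (1 - Real.exp (-y)) * (l⁻¹ - 1) ≤ -((k + 1) * (l - 1 - e)) := by
      have hli : l⁻¹ - 1 = -((l - 1) / l) := by
        field_simp
        ring
      rw [hli, mul_neg, neg_le_neg_iff]
      calc ((k : ℝ) + 1) * (l - 1 - e) = l * (k + 1) * (1 - l * d) * ((l - 1) / l) := by
            rw [← hde]
            field_simp
        _ ≤ _ := by gcongr
    rw [hpow, inv_pow, div_inv_eq_mul, ← Real.exp_log (show 0 < l ^ k by positivity), Real.log_pow,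
      ← Real.exp_add, Real.exp_le_exp]
    have hmin := min_le_left e (l * d / 2)
    have hk0 : (0 : ℝ) ≤ k := by positivity
    nlinarith [mul_le_mul_of_nonneg_left hmin hk0]
  · have h1 : satTerm l n k ≤ Real.exp (-l / n) ^ (k + k.choose 2) := by
      rw [heq]
      refine mul_le_of_le_one_left (by positivity) ?_
      simpa using choose_mul_reachAllProb_le (θ := 1) hq0 hq1 one_pos n k
    refine h1.trans ?_
    rw [← Real.exp_nat_mul, Real.exp_le_exp, Nat.cast_add, Nat.cast_choose_two]
    have hmin := min_le_right e (l * d / 2)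
    have hk0 : (0 : ℝ) ≤ k := by positivity
    have h2 : (k : ℝ) * (l * d / 2) ≤ ((k : ℝ) + k * (k - 1) / 2) * (l / n) := by
      rw [show ((k : ℝ) + k * (k - 1) / 2) * (l / n) = ((k : ℝ) + k * (k - 1) / 2) * l / n by ring,
        le_div_iff₀ hn']
      nlinarith [mul_le_mul_of_nonneg_left hk.le (mul_nonneg hk0 hl0.le)]
    have h3 : (-l / n : ℝ) = -(l / n) := neg_div _ _
    rw [h3]
    nlinarith [mul_le_mul_of_nonneg_left hmin hk0]

lemma tendsto_choose_div_pow (k : ℕ) :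
    Tendsto (fun n : ℕ => (n.choose k : ℝ) / (n : ℝ) ^ k) atTop (𝓝 (1 / k.factorial)) := by
  have h := (isEquivalent_choose k).div
    (Asymptotics.IsEquivalent.refl (u := fun n : ℕ => (n : ℝ) ^ k) (l := atTop))
  refine h.symm.tendsto_nhds (tendsto_const_nhds.congr' ?_)
  filter_upwards [eventually_ne_atTop 0] with n hn
  have : (n : ℝ) ^ k ≠ 0 := pow_ne_zero _ (by exact_mod_cast hn)
  simp only [Pi.div_apply]
  field_simp

lemma tendsto_exp_neg_div_pow (l : ℝ) {e : ℕ → ℕ} {L : ℝ}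
    (he : Tendsto (fun n : ℕ => (e n : ℝ) / n) atTop (𝓝 L)) :
    Tendsto (fun n : ℕ => Real.exp (-l / n) ^ e n) atTop (𝓝 (Real.exp (-l * L))) := by
  have h : (fun n : ℕ => Real.exp (-l / n) ^ e n) = fun n : ℕ => Real.exp (-l * (e n / n)) := by
    ext n
    rw [← Real.exp_nat_mul]
    congr 1
    ring
  rw [h]
  exact (Real.continuous_exp.tendsto _).comp (he.const_mul _)

lemma tendsto_floor_mul_div {x : ℝ} (hx : 0 ≤ x) :
    Tendsto (fun n : ℕ => (⌊x * n⌋₊ : ℝ) / n) atTop (𝓝 x) :=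
  (tendsto_nat_floor_mul_div_atTop hx).comp tendsto_natCast_atTop_atTop

lemma tendsto_floor_mul_atTop {x : ℝ} (hx : 0 < x) :
    Tendsto (fun n : ℕ => ⌊x * n⌋₊) atTop atTop :=
  tendsto_nat_floor_atTop.comp (tendsto_natCast_atTop_atTop.const_mul_atTop hx)

lemma tendsto_mul_sub_add_div {N : ℕ → ℕ} (hN : Tendsto N atTop atTop) {x : ℝ}
    (hNx : Tendsto (fun n : ℕ => (N n : ℝ) / n) atTop (𝓝 x)) (k j : ℕ) :
    Tendsto (fun n : ℕ => (((k + 1) * (N n - k) + j : ℕ) : ℝ) / n) atTop (𝓝 ((k + 1) * x)) := by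
  have h := (hNx.const_mul ((k : ℝ) + 1)).add
    (tendsto_const_div_atTop_nhds_zero_nat ((j : ℝ) - (k + 1) * k))
  rw [add_zero] at h
  refine h.congr' ?_
  filter_upwards [hN.eventually_ge_atTop k] with n hn
  push_cast [Nat.cast_sub hn]
  ring

lemma tendsto_satTerm_sub_dualTerm {l x : ℝ} (hl : 0 < l) (hx : 0 < x)
    (hlx : l * (x - 1) = Real.log x) (k : ℕ) :
    Tendsto (fun n : ℕ => satTerm l n k - x * dualTerm l x n k) atTop (𝓝 0) := by
  have hA : Tendsto (fun n : ℕ => (n.choose k : ℝ) / (n : ℝ) ^ k *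
      Real.exp (-l / n) ^ ((k + 1) * (n - k) + (k + k.choose 2))) atTop
      (𝓝 (1 / k.factorial * Real.exp (-l * ((k + 1) * 1)))) := by
    refine (tendsto_choose_div_pow k).mul (tendsto_exp_neg_div_pow l ?_)
    refine tendsto_mul_sub_add_div (N := fun n => n) tendsto_id ?_ k _
    refine tendsto_const_nhds.congr' ?_
    filter_upwards [eventually_ne_atTop 0] with n hn
    rw [div_self (by exact_mod_cast hn)]
  have hB : Tendsto (fun n : ℕ => (⌊x * n⌋₊.choose k : ℝ) / (⌊x * n⌋₊ : ℝ) ^ k *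
      ((⌊x * n⌋₊ : ℝ) / n) ^ k * Real.exp (-l / n) ^ ((k + 1) * (⌊x * n⌋₊ - k) + 0)) atTop
      (𝓝 (1 / k.factorial * x ^ k * Real.exp (-l * ((k + 1) * x)))) := by
    refine ((((tendsto_choose_div_pow k).comp (tendsto_floor_mul_atTop hx))).mul
      ((tendsto_floor_mul_div hx.le).pow k)).mul (tendsto_exp_neg_div_pow l ?_)
    exact tendsto_mul_sub_add_div (tendsto_floor_mul_atTop hx) (tendsto_floor_mul_div hx.le) k 0
  have hlim : 1 / (k.factorial : ℝ) * Real.exp (-l * ((k + 1) * 1)) -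
      x * (1 / k.factorial * x ^ k * Real.exp (-l * ((k + 1) * x))) = 0 := by
    have hxk : x * x ^ k = Real.exp ((k + 1) * (l * (x - 1))) := by
      rw [hlx, ← pow_succ', show ((k : ℝ) + 1) = ((k + 1 : ℕ) : ℝ) by push_cast; rfl,
        Real.exp_nat_mul, Real.exp_log hx]
    have : x * (1 / (k.factorial : ℝ) * x ^ k * Real.exp (-l * ((k + 1) * x))) =
        1 / k.factorial * (x * x ^ k * Real.exp (-l * ((k + 1) * x))) := by ring
    rw [this, hxk, ← Real.exp_add, sub_eq_zero]
    congr 2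
    ring
  have hAB := hA.sub (hB.const_mul x)
  rw [hlim] at hAB
  have hbound := hAB.abs.const_mul ((l * (k + 1)) ^ k)
  rw [abs_zero, mul_zero] at hbound
  refine squeeze_zero_norm' ?_ hbound
  filter_upwards [eventually_gt_atTop 0, (tendsto_floor_mul_atTop hx).eventually_gt_atTop 0]
    with n hn hN
  have hn' : (0 : ℝ) < n := by exact_mod_cast hn
  have hN' : (0 : ℝ) < ⌊x * n⌋₊ := by exact_mod_cast hN
  have hq0 : 0 ≤ Real.exp (-l / n) := (Real.exp_pos _).le
  have hq1 := exp_neg_div_le_one hl.le n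
  have hc := reachAllProb_nonneg hq0 hq1 k
  have hc' : reachAllProb (Real.exp (-l / n)) k * n ^ k ≤ (l * (k + 1)) ^ k := by
    have h1 := (reachAllProb_le hq0 hq1 k).trans (pow_le_pow_left₀
      (sub_nonneg.2 (pow_le_one₀ hq0 hq1)) (one_sub_exp_pow_le l n k) k)
    rwa [div_pow, le_div_iff₀ (by positivity)] at h1
  refine le_trans (le_of_eq ?_) (mul_le_mul_of_nonneg_right hc' (abs_nonneg _))
  rw [← abs_of_nonneg (show 0 ≤ reachAllProb (Real.exp (-l / n)) k * (n : ℝ) ^ k by positivity),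
    ← abs_mul, Real.norm_eq_abs]
  congr 1
  unfold satTerm dualTerm
  rw [add_zero, div_pow]
  generalize Real.exp (-l / n) = q
  rw [pow_add q ((k + 1) * (n - k))]
  field_simp

/-- When each clause is left out independently with probability `exp (-l / n)`, where `l > 1`, the
probability of satisfiability tends to the solution `x < 1` of `log x = l * (x - 1)`. -/
lemma tendsto_subsetProb_satCodes {l x : ℝ} (hl : 1 < l) (hx : 0 < x) (hlx1 : l * x < 1)
    (hlx : l * (x - 1) = Real.log x) :
    Tendsto (fun n : ℕ => subsetProb (Real.exp (-l / n))
      (fun X : Finset (HornCode n) => SatCodes X)) atTop (𝓝 x) := by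
  have hl0 : 0 < l := by linarith
  have hlx0 : 0 < l * x := by positivity
  obtain ⟨z, hz, hzle⟩ := satTerm_le hl
  set r : ℝ := l * x * Real.exp (1 - l * x) with hr
  have hr0 : 0 ≤ r := by positivity
  have hr1 : r < 1 := by
    have hlt : l * x < Real.exp (l * x - 1) := by
      have := Real.add_one_lt_exp (show l * x - 1 ≠ 0 by linarith)
      linarith
    calc r < Real.exp (l * x - 1) * Real.exp (1 - l * x) := by
          rw [hr]
          gcongr
      _ = 1 := by
          rw [← Real.exp_add]
          simp
  have hsummable : Summable fun k : ℕ => Real.exp (-z) ^ k + x * (Real.exp (1 - l * x) * r ^ k) :=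
    (summable_geometric_of_lt_one (Real.exp_pos _).le (by simpa using hz)).add
      (((summable_geometric_of_lt_one hr0 hr1).mul_left _).mul_left _)
  have hlim := tendsto_tsum_of_dominated_convergence (𝓕 := (atTop : Filter ℕ))
    (f := fun n k => satTerm l n k - x * dualTerm l x n k) (g := fun _ => 0) hsummable
    (fun k => tendsto_satTerm_sub_dualTerm hl0 hx hlx k) (by
      filter_upwards [eventually_gt_atTop 0] with n hn k
      refine (norm_sub_le _ _).trans (add_le_add ?_ ?_)
      · rw [Real.norm_of_nonneg (satTerm_nonneg hl0.le n k)]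
        exact hzle n hn k
      · have h := dualTerm_nonneg hl0.le x n k
        rw [Real.norm_of_nonneg (by positivity)]
        exact mul_le_mul_of_nonneg_left (dualTerm_le hl0 hx hlx1 hn k) hx.le)
  rw [tsum_zero] at hlim
  have hA : ∀ n : ℕ, HasSum (satTerm l n)
      (subsetProb (Real.exp (-l / n)) (fun X : Finset (HornCode n) => SatCodes X)) := by
    intro n
    rw [subsetProb_satCodes]
    refine hasSum_sum_of_ne_finset_zero fun k hk => ?_
    rw [satTerm, Nat.choose_eq_zero_of_lt (by simpa using hk)]
    simp
  have hB : ∀ n : ℕ, HasSum (dualTerm l x n) 1 := by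
    intro n
    rw [← sum_reachAllProb (Real.exp (-l / n)) ⌊x * n⌋₊]
    refine hasSum_sum_of_ne_finset_zero fun k hk => ?_
    rw [dualTerm, Nat.choose_eq_zero_of_lt (by simpa using hk)]
    simp
  have hAB : ∀ n : ℕ, ∑' k, (satTerm l n k - x * dualTerm l x n k) =
      subsetProb (Real.exp (-l / n)) (fun X : Finset (HornCode n) => SatCodes X) - x := by
    intro n
    have := ((hA n).sub ((hB n).mul_left x)).tsum_eq
    rwa [mul_one] at this
  simp only [hAB] at hlim
  simpa using hlim.add_const x

end Asymptotics

section Threshold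

lemma tendsto_exp_div_pow_floor {a c : ℝ} (ha : 0 < a) (hc : 0 < c) (hac : a ≠ c) :
    Tendsto (fun n : ℕ => Real.exp (a * (n + 1) * (c / a - 1)) / (c / a) ^ ⌊c * (n : ℝ)⌋₊)
      atTop (𝓝 0) := by
  set g : ℝ := Real.log (c / a) with hg
  have hθ : 0 < c / a := by positivity
  have hrate : c - a - c * g < 0 := by
    have h := Real.log_lt_sub_one_of_pos (show 0 < a / c by positivity)
      (fun h => hac ((div_eq_one_iff_eq hc.ne').1 h))
    have h' : Real.log (a / c) = -g := by
      rw [hg, ← Real.log_inv, inv_div]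
    have h2 : c * (a / c - 1) = a - c := by
      field_simp
    rw [h'] at h
    nlinarith [mul_lt_mul_of_pos_left h hc]
  have hlin : Tendsto (fun n : ℕ => (c - a + |g|) + (c - a - c * g) * (n : ℝ)) atTop atBot :=
    tendsto_atBot_add_const_left _ _
      (tendsto_natCast_atTop_atTop.const_mul_atTop_of_neg hrate)
  refine squeeze_zero (fun n => by positivity) (fun n => ?_) (Real.tendsto_exp_atBot.comp hlin)
  rw [Function.comp_apply, ← Real.exp_log (show 0 < (c / a) ^ ⌊c * (n : ℝ)⌋₊ by positivity),
    ← Real.exp_sub, Real.exp_le_exp, Real.log_pow, ← hg]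
  have h1 : a * (n + 1) * (c / a - 1) = (n + 1) * (c - a) := by
    field_simp
  have h2 : (⌊c * (n : ℝ)⌋₊ : ℝ) ≤ c * n := Nat.floor_le (by positivity)
  have h3 := Nat.lt_floor_add_one (c * (n : ℝ))
  have h4 : (c * n - ⌊c * (n : ℝ)⌋₊) * g ≤ |g| := by
    calc (c * n - ⌊c * (n : ℝ)⌋₊) * g ≤ (c * n - ⌊c * (n : ℝ)⌋₊) * |g| :=
          mul_le_mul_of_nonneg_left (le_abs_self g) (by linarith)
      _ ≤ 1 * |g| := mul_le_mul_of_nonneg_right (by linarith) (abs_nonneg g)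
      _ = |g| := one_mul _
  rw [h1]
  linarith

lemma neg_mul_div_card_hornCode (l : ℝ) {n : ℕ} (hn : 0 < n) :
    -(3 * l / 2 * (n + 1)) / Fintype.card (HornCode n) = -l / n := by
  have hn' : (0 : ℝ) < n := by exact_mod_cast hn
  have hcard : (Fintype.card (HornCode n) : ℝ) = 3 / 2 * (n * (n + 1)) := by
    rw [card_hornCode]
    push_cast [Nat.cast_choose_two]
    ring
  rw [hcard]
  field_simp

lemma one_lt_log_div {x : ℝ} (hx : x ∈ Set.Ioo (0 : ℝ) 1) : 1 < Real.log x / (x - 1) := by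
  have h := Real.log_lt_sub_one_of_pos hx.1 hx.2.ne
  rw [lt_div_iff_of_neg (by linarith [hx.2])]
  linarith

lemma log_div_mul_lt_one {x : ℝ} (hx : x ∈ Set.Ioo (0 : ℝ) 1) :
    Real.log x / (x - 1) * x < 1 := by
  have h := Real.log_lt_sub_one_of_pos (inv_pos.2 hx.1) (fun h => hx.2.ne (inv_eq_one.1 h))
  rw [Real.log_inv] at h
  rw [div_mul_eq_mul_div, div_lt_iff_of_neg (by linarith [hx.2])]
  have h2 := mul_lt_mul_of_pos_right h hx.1
  rw [sub_mul, inv_mul_cancel₀ hx.1.ne'] at h2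
  linarith

lemma log_div_strictAntiOn {x y : ℝ} (hx : 0 < x) (hxy : x < y) (hy : y < 1) :
    Real.log y / (y - 1) < Real.log x / (x - 1) := by
  have := strictConcaveOn_log_Ioi.secant_strict_mono (a := 1) (x := x) (y := y)
    (by simp) hx (hx.trans hxy) (by linarith) hy.ne hxy
  simpa using this

lemma tendsto_subsetProb_log_div {x : ℝ} (hx : x ∈ Set.Ioo (0 : ℝ) 1) :
    Tendsto (fun n : ℕ => subsetProb (Real.exp (-(Real.log x / (x - 1)) / n))
      (fun X : Finset (HornCode n) => SatCodes X)) atTop (𝓝 x) :=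
  tendsto_subsetProb_satCodes (one_lt_log_div hx) hx.1 (log_div_mul_lt_one hx)
    (div_mul_cancel₀ _ (by linarith [hx.2]))

lemma eventually_lt_satProb {c x y : ℝ} (hc : 0 < c) (hx : x ∈ Set.Ioo (0 : ℝ) 1)
    (hcx : 2 * c / 3 < Real.log x / (x - 1)) (hy : y < x) :
    ∀ᶠ n : ℕ in atTop, y < satProb 2 n ⌊c * (n : ℝ)⌋₊ := by
  set l : ℝ := Real.log x / (x - 1) with hl
  have ha : 0 < 3 * l / 2 := by linarith
  have hac : c < 3 * l / 2 := by linarith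
  have hlim := (tendsto_subsetProb_log_div hx).sub (tendsto_exp_div_pow_floor ha hc hac.ne')
  rw [sub_zero] at hlim
  filter_upwards [hlim.eventually_const_lt hy, eventually_gt_atTop 0] with n hn hn0
  have : Nonempty (HornCode n) := ⟨Sum.inl (none, ⟨0, hn0⟩)⟩
  have h := subsetProb_le_tupleProb_add (E := fun X : Finset (HornCode n) => SatCodes X)
    (fun X Y hXY hY => hY.mono hXY) (μ := 3 * l / 2 * (n + 1)) (θ := c / (3 * l / 2))
    (by positivity) (by positivity) ((div_le_one ha).2 hac.le) ⌊c * (n : ℝ)⌋₊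
  rw [neg_mul_div_card_hornCode l hn0] at h
  rw [satProb_two_eq]
  linarith

lemma eventually_satProb_lt {c x y : ℝ} (hc : 0 < c) (hx : x ∈ Set.Ioo (0 : ℝ) 1)
    (hcx : Real.log x / (x - 1) < 2 * c / 3) (hy : x < y) :
    ∀ᶠ n : ℕ in atTop, satProb 2 n ⌊c * (n : ℝ)⌋₊ < y := by
  have hl1 := one_lt_log_div hx
  set l : ℝ := Real.log x / (x - 1) with hl
  have ha : 0 < 3 * l / 2 := by linarith
  have hac : 3 * l / 2 < c := by linarith
  have hlim := (tendsto_subsetProb_log_div hx).add (tendsto_exp_div_pow_floor ha hc hac.ne)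
  rw [add_zero] at hlim
  filter_upwards [hlim.eventually_lt_const hy, eventually_gt_atTop 0] with n hn hn0
  have : Nonempty (HornCode n) := ⟨Sum.inl (none, ⟨0, hn0⟩)⟩
  have h := tupleProb_le_subsetProb_add (E := fun X : Finset (HornCode n) => SatCodes X)
    (fun X Y hXY hY => hY.mono hXY) (μ := 3 * l / 2 * (n + 1)) (θ := c / (3 * l / 2))
    (by positivity) ((one_le_div ha).2 hac.le) ⌊c * (n : ℝ)⌋₊
  rw [neg_mul_div_card_hornCode l hn0] at h
  rw [satProb_two_eq]
  linarith

lemma exists_log_div_eq {L : ℝ} (hL : 1 < L) :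
    ∃ x ∈ Set.Ioo (0 : ℝ) 1, Real.log x / (x - 1) = L := by
  have hL0 : 0 < L := by linarith
  have hle : Real.exp (-L) ≤ L⁻¹ := by
    rw [Real.exp_neg]
    exact inv_anti₀ hL0 (by linarith [Real.add_one_le_exp L])
  have hcont : ContinuousOn (fun x : ℝ => Real.log x - L * (x - 1))
      (Set.Icc (Real.exp (-L)) L⁻¹) :=
    (Real.continuousOn_log.mono fun x hx => ((Real.exp_pos _).trans_le hx.1).ne').sub
      (by fun_prop)
  have hmem : (0 : ℝ) ∈ Set.Icc (Real.log (Real.exp (-L)) - L * (Real.exp (-L) - 1))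
      (Real.log L⁻¹ - L * (L⁻¹ - 1)) := by
    constructor
    · rw [Real.log_exp]
      nlinarith [mul_pos hL0 (Real.exp_pos (-L))]
    · rw [Real.log_inv, mul_sub, mul_inv_cancel₀ hL0.ne']
      linarith [Real.log_le_sub_one_of_pos hL0]
  obtain ⟨x, hx, hx0⟩ := intermediate_value_Icc hle hcont hmem
  have hx1 : x < 1 := hx.2.trans_lt (inv_lt_one_of_one_lt₀ hL)
  refine ⟨x, ⟨(Real.exp_pos _).trans_le hx.1, hx1⟩, ?_⟩
  rw [div_eq_iff (by linarith)]
  simp only at hx0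
  linarith

end Threshold


/-- With `F₂ : (0,1) → (1,∞)`, `F₂(x) = ln x / (x−1)`, the limit as
`n → ∞` of the probability that a random formula from `Ω(2,n,⌊cn⌋)` is satisfiable
equals `1` if `c ≤ 3/2`, and equals `F₂⁻¹(2c/3)` if `c > 3/2`. -/
theorem horn_sat_prob_two
    (c : ℝ) (hc : 0 < c) :
    (c ≤ 3 / 2 →
      Tendsto (fun n : ℕ => satProb 2 n ⌊c * (n : ℝ)⌋₊) atTop (𝓝 1)) ∧
    (3 / 2 < c →
      ∃ x ∈ Set.Ioo (0 : ℝ) 1, Real.log x / (x - 1) = 2 * c / 3 ∧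
        Tendsto (fun n : ℕ => satProb 2 n ⌊c * (n : ℝ)⌋₊) atTop (𝓝 x)) := by
  constructor
  · intro hc'
    refine tendsto_order.2 ⟨fun y hy => ?_, fun y hy => Eventually.of_forall fun n => ?_⟩
    · obtain ⟨x, hx, hx1⟩ := exists_between (max_lt hy one_pos)
      have hxm : x ∈ Set.Ioo (0 : ℝ) 1 := ⟨(le_max_right _ _).trans_lt hx, hx1⟩
      refine eventually_lt_satProb hc hxm ?_ ((le_max_left _ _).trans_lt hx)
      linarith [one_lt_log_div hxm]
    · rw [satProb_two_eq]
      exact (tupleProb_le_one _ _).trans_lt hy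
  · intro hc'
    obtain ⟨x, hx, hxL⟩ := exists_log_div_eq (show 1 < 2 * c / 3 by linarith)
    refine ⟨x, hx, hxL, tendsto_order.2 ⟨fun y hy => ?_, fun y hy => ?_⟩⟩
    · obtain ⟨w, hw, hwx⟩ := exists_between (max_lt hy hx.1)
      have hw0 : 0 < w := (le_max_right _ _).trans_lt hw
      refine eventually_lt_satProb hc ⟨hw0, hwx.trans hx.2⟩ ?_ ((le_max_left _ _).trans_lt hw)
      rw [← hxL]
      exact log_div_strictAntiOn hw0 hwx hx.2
    · obtain ⟨w, hxw, hw⟩ := exists_between (lt_min hy hx.2)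
      have hw1 : w < 1 := hw.trans_le (min_le_right _ _)
      refine eventually_satProb_lt hc ⟨hx.1.trans hxw, hw1⟩ ?_ (hw.trans_le (min_le_left _ _))
      rw [← hxL]
      exact log_div_strictAntiOn hx.1 hxw hw1
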